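/- In the group Γ the following hold: d_i b_j d_i = c_k for every (i,j,k) ∈ C(r); f₀ b_i f₀ = c_i for every 1 ≤ i ≤ r+5; f₀ g₀ f₀ g₀ = J; and f₂ g₂ f₂ g₂ = J. -/

import Mathlib

/-- The generators `o₁, …, o_r, u₁, …, u₅` of the group `𝒫₀`. -/
inductive P0Gen (r : ℕ) : Type
  | o : Fin r → P0Gen r
  | u : Fin 5 → P0Gen r

/-- The free-group letter `o_k` (`1 ≤ k ≤ r`; junk value `1` out of range). -/
def oW (r : ℕ) (k : ℕ) : FreeGroup (P0Gen r) :=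
  if h : 1 ≤ k ∧ k ≤ r then FreeGroup.of (P0Gen.o ⟨k - 1, by omega⟩) else 1

/-- The free-group letter `u_k` (`1 ≤ k ≤ 5`; junk value `1` out of range). -/
def uW (r : ℕ) (k : ℕ) : FreeGroup (P0Gen r) :=
  if h : 1 ≤ k ∧ k ≤ 5 then FreeGroup.of (P0Gen.u ⟨k - 1, by omega⟩) else 1

/-- The relations `s² = e` for every generator `s` of `𝒫₀`. -/
def P0RelsSq (r : ℕ) : Set (FreeGroup (P0Gen r)) :=
  Set.range fun g : P0Gen r => FreeGroup.of g * FreeGroup.of g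

/-- The relations `u₃ = u₂o₁u₂`, `u₄ = u₂o₂u₂`, `u₅ = u₁u₃u₁`, `o₂ = u₁u₄u₁`,
`u₅ = o₁o_r o₁` of `𝒫₀`. -/
def P0RelsU (r : ℕ) : Set (FreeGroup (P0Gen r)) :=
  { uW r 2 * oW r 1 * uW r 2 * (uW r 3)⁻¹,
    uW r 2 * oW r 2 * uW r 2 * (uW r 4)⁻¹,
    uW r 1 * uW r 3 * uW r 1 * (uW r 5)⁻¹,
    uW r 1 * uW r 4 * uW r 1 * (oW r 2)⁻¹,
    oW r 1 * oW r r * oW r 1 * (uW r 5)⁻¹ }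

/-- The remaining conjugacy relations of `𝒫₀`: if `r` is even, `o_{1+2j} = o₁o_{2j}o₁` and
`o_{2+2j} = o₂o_{1+2j}o₂` for `j = 1, …, r/2 − 1`; if `r` is odd, `o₃ = o₂o₁o₂` together
with `o_{2+2j} = o₁o_{1+2j}o₁` and `o_{3+2j} = o₂o_{2+2j}o₂` for `j = 1, …, (r−3)/2`. -/
def P0RelsO (r : ℕ) : Set (FreeGroup (P0Gen r)) :=
  if Even r then
    ⋃ j ∈ Finset.Icc 1 (r / 2 - 1),
      ({oW r 1 * oW r (2 * j) * oW r 1 * (oW r (1 + 2 * j))⁻¹,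
        oW r 2 * oW r (1 + 2 * j) * oW r 2 * (oW r (2 + 2 * j))⁻¹} :
          Set (FreeGroup (P0Gen r)))
  else
    {oW r 2 * oW r 1 * oW r 2 * (oW r 3)⁻¹} ∪
    ⋃ j ∈ Finset.Icc 1 ((r - 3) / 2),
      ({oW r 1 * oW r (1 + 2 * j) * oW r 1 * (oW r (2 + 2 * j))⁻¹,
        oW r 2 * oW r (2 + 2 * j) * oW r 2 * (oW r (3 + 2 * j))⁻¹} :
          Set (FreeGroup (P0Gen r)))

/-- All defining relations of `𝒫₀`. -/
def P0Rels (r : ℕ) : Set (FreeGroup (P0Gen r)) := P0RelsSq r ∪ P0RelsU r ∪ P0RelsO r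

/-- The group `𝒫₀`, presented by the above generators and relations. -/
abbrev P0 (r : ℕ) : Type := PresentedGroup (P0Rels r)

/-- The relabelled generator-word `a_i` of `𝒫₀`: `a₁ = o₁`, `a₂ = o₂`, `a_{i+2} = u_i`
for `i = 1, …, 5`, and `a_j = o_{j−5}` for `j = 8, …, r+5`. -/
def aW (r : ℕ) (i : ℕ) : FreeGroup (P0Gen r) :=
  if i ≤ 2 then oW r i else if i ≤ 7 then uW r (i - 2) else oW r (i - 5)

/-- `C(r)`: the set of triples `(i,j,k)` such that `a_i a_j a_i = a_k` is one of the
conjugacy relations of `𝒫₀`. -/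
def Cset (r : ℕ) : Set (ℕ × ℕ × ℕ) :=
  {t | aW r t.1 * aW r t.2.1 * aW r t.1 * (aW r t.2.2)⁻¹ ∈ P0RelsU r ∪ P0RelsO r}

/-- The generators of the solution group `Γ`: `a_i, b_i, c_i, d_i, p_{i,1}, …, p_{i,5}`
(`1 ≤ i ≤ r+5`), `f₀, f₁, f₂, g₀, g₁, g₂, m₀, m₁, m₂`, `h_{jk}` and `q_{c,1}, …, q_{c,6}`
(one family for each `c = (i,j,k) ∈ C(r)`), together with the central generator `J`. -/
inductive GaGen (r : ℕ) : Type
  | a : Fin (r + 5) → GaGen r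
  | b : Fin (r + 5) → GaGen r
  | c : Fin (r + 5) → GaGen r
  | d : Fin (r + 5) → GaGen r
  | p : Fin (r + 5) → Fin 5 → GaGen r
  | f : Fin 3 → GaGen r
  | g : Fin 3 → GaGen r
  | m : Fin 3 → GaGen r
  | h : {t : ℕ × ℕ × ℕ // t ∈ Cset r} → GaGen r
  | q : {t : ℕ × ℕ × ℕ // t ∈ Cset r} → Fin 6 → GaGen r
  | J : GaGen r

/-- The free-group letter `a_i` of `Γ` (`1 ≤ i ≤ r+5`; junk value `1` out of range). -/
def ga (r : ℕ) (i : ℕ) : FreeGroup (GaGen r) :=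
  if h : 1 ≤ i ∧ i ≤ r + 5 then FreeGroup.of (GaGen.a ⟨i - 1, by omega⟩) else 1

/-- The free-group letter `b_i` of `Γ`. -/
def gb (r : ℕ) (i : ℕ) : FreeGroup (GaGen r) :=
  if h : 1 ≤ i ∧ i ≤ r + 5 then FreeGroup.of (GaGen.b ⟨i - 1, by omega⟩) else 1

/-- The free-group letter `c_i` of `Γ`. -/
def gc (r : ℕ) (i : ℕ) : FreeGroup (GaGen r) :=
  if h : 1 ≤ i ∧ i ≤ r + 5 then FreeGroup.of (GaGen.c ⟨i - 1, by omega⟩) else 1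

/-- The free-group letter `d_i` of `Γ`. -/
def gd (r : ℕ) (i : ℕ) : FreeGroup (GaGen r) :=
  if h : 1 ≤ i ∧ i ≤ r + 5 then FreeGroup.of (GaGen.d ⟨i - 1, by omega⟩) else 1

/-- The free-group letter `p_{i,l}` of `Γ` (`1 ≤ i ≤ r+5`, `1 ≤ l ≤ 5`). -/
def gp (r : ℕ) (i l : ℕ) : FreeGroup (GaGen r) :=
  if h : (1 ≤ i ∧ i ≤ r + 5) ∧ (1 ≤ l ∧ l ≤ 5) then
    FreeGroup.of (GaGen.p ⟨i - 1, by omega⟩ ⟨l - 1, by omega⟩) else 1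

/-- The free-group letter `f_l` of `Γ` (`0 ≤ l ≤ 2`). -/
def gf (r : ℕ) (l : ℕ) : FreeGroup (GaGen r) :=
  if h : l ≤ 2 then FreeGroup.of (GaGen.f ⟨l, by omega⟩) else 1

/-- The free-group letter `g_l` of `Γ` (`0 ≤ l ≤ 2`). -/
def gg (r : ℕ) (l : ℕ) : FreeGroup (GaGen r) :=
  if h : l ≤ 2 then FreeGroup.of (GaGen.g ⟨l, by omega⟩) else 1

/-- The free-group letter `m_l` of `Γ` (`0 ≤ l ≤ 2`). -/
def gm (r : ℕ) (l : ℕ) : FreeGroup (GaGen r) :=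
  if h : l ≤ 2 then FreeGroup.of (GaGen.m ⟨l, by omega⟩) else 1

/-- The free-group letter `h_{jk}` of `Γ`, for `(i,j,k) ∈ C(r)`. -/
def gh (r : ℕ) (t : {t : ℕ × ℕ × ℕ // t ∈ Cset r}) : FreeGroup (GaGen r) :=
  FreeGroup.of (GaGen.h t)

/-- The free-group letter `q_{c,l}` of `Γ`, for `c ∈ C(r)` and `1 ≤ l ≤ 6`. -/
def gq (r : ℕ) (t : {t : ℕ × ℕ × ℕ // t ∈ Cset r}) (l : ℕ) : FreeGroup (GaGen r) :=
  if h : 1 ≤ l ∧ l ≤ 6 then FreeGroup.of (GaGen.q t ⟨l - 1, by omega⟩) else 1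

/-- The free-group letter `J` of `Γ`. -/
def gJ (r : ℕ) : FreeGroup (GaGen r) := FreeGroup.of GaGen.J

/-- The relators of `Γ` corresponding to the linear equations of the binary linear
system: for each `1 ≤ i ≤ r+5` the relations `a_i = b_i c_i`, `a_i = f₀ d_i`,
`f₀f₁f₂ = e`, `b_i f₂ p_{i,1} = e`, `p_{i,1}p_{i,2}p_{i,3} = e`, `f₀p_{i,3}p_{i,4} = e`,
`c_i p_{i,4} p_{i,5} = e`, `f₁ p_{i,2} p_{i,5} = e`; for each `c = (i,j,k) ∈ C(r)` the
relations `h_{jk} b_j c_k = e`, `d_i q_{c,1} f₂ = e`, `b_j f₂ q_{c,2} = e`,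
`q_{c,2}q_{c,3}q_{c,4} = e`, `d_i q_{c,4} q_{c,5} = e`, `c_k q_{c,5} q_{c,6} = e`,
`q_{c,1} q_{c,3} q_{c,6} = e`; and the Magic Square relations `g₀g₁g₂ = e`,
`m₀m₁m₂ = e`, `f₀g₂m₀ = e`, `f₂g₀m₁ = e`, `f₁g₁m₂ = J`. -/
def GaRelsLin (r : ℕ) : Set (FreeGroup (GaGen r)) :=
  (⋃ i ∈ Finset.Icc 1 (r + 5),
    ({gb r i * gc r i * (ga r i)⁻¹,
      gf r 0 * gd r i * (ga r i)⁻¹,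
      gf r 0 * gf r 1 * gf r 2,
      gb r i * gf r 2 * gp r i 1,
      gp r i 1 * gp r i 2 * gp r i 3,
      gf r 0 * gp r i 3 * gp r i 4,
      gc r i * gp r i 4 * gp r i 5,
      gf r 1 * gp r i 2 * gp r i 5} : Set (FreeGroup (GaGen r)))) ∪
  (⋃ t : {t : ℕ × ℕ × ℕ // t ∈ Cset r},
    ({gh r t * gb r t.1.2.1 * gc r t.1.2.2,
      gd r t.1.1 * gq r t 1 * gf r 2,
      gb r t.1.2.1 * gf r 2 * gq r t 2,
      gq r t 2 * gq r t 3 * gq r t 4,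
      gd r t.1.1 * gq r t 4 * gq r t 5,
      gc r t.1.2.2 * gq r t 5 * gq r t 6,
      gq r t 1 * gq r t 3 * gq r t 6} : Set (FreeGroup (GaGen r)))) ∪
  ({gg r 0 * gg r 1 * gg r 2,
    gm r 0 * gm r 1 * gm r 2,
    gf r 0 * gg r 2 * gm r 0,
    gf r 2 * gg r 0 * gm r 1,
    gf r 1 * gg r 1 * gm r 2 * (gJ r)⁻¹} : Set (FreeGroup (GaGen r)))

/-- All defining relations of `Γ`: `s² = e` for every generator (including `J² = e`),
`J s J s = e` for every generator `s ≠ J`, and the linear relators above. -/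
def GaRels (r : ℕ) : Set (FreeGroup (GaGen r)) :=
  (Set.range fun s : GaGen r => FreeGroup.of s * FreeGroup.of s) ∪
  ((fun s : GaGen r => gJ r * FreeGroup.of s * gJ r * FreeGroup.of s) ''
    {s : GaGen r | s ≠ GaGen.J}) ∪
  GaRelsLin r

/-- The solution group `Γ`, presented by the above generators and relations. -/
abbrev Ga (r : ℕ) : Type := PresentedGroup (GaRels r)

/-!
In a linear relation `xyz = e` between involutions, any two letters multiply to the third in
either order. The relations attached to an index `i` and those attached to a triple `c ∈ C(r)`
contain the same gadget of six such relations, with `(f₀, f₁)` in the place of `(d_i, q_{c,1})`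
and `p_{i,l}` in the place of `q_{c,l+1}`; eliminating its auxiliary letters leaves a conjugacy
relation. In the magic square, substituting `f₁ = f₂f₀` and `m₂ = m₀m₁ = (g₂f₀)(g₀f₂)` into
`f₁g₁m₂ = J` leaves `f₂(f₀g₀f₀g₀)f₂ = J`, and `J` is central. The relation `f₂g₂f₂g₂ = J` is the
mirror image of `f₀g₀f₀g₀ = J`, under the exchange of `f₀, g₀, m₀` with `f₂, g₂, m₁`.
-/

/-- The relation `xyz = e` between involutions: `x`, `y`, `z` are the images of the three nontrivial
elements of the Klein four-group under a homomorphism, so that the relation is symmetric in them.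
The identity counts as an involution. -/
structure IsKleinTriple {G : Type*} [Group G] (x y z : G) : Prop where
  left_mul_self : x * x = 1
  mid_mul_self : y * y = 1
  right_mul_self : z * z = 1
  mul_mul_eq_one : x * y * z = 1

namespace IsKleinTriple

variable {G : Type*} [Group G] {x y z : G}

theorem mul_eq (h : IsKleinTriple x y z) : x * y = z :=
  (eq_inv_of_mul_eq_one_left h.mul_mul_eq_one).trans
    (inv_eq_of_mul_eq_one_left h.right_mul_self)

theorem rotate (h : IsKleinTriple x y z) : IsKleinTriple y z x where
  left_mul_self := h.mid_mul_self
  mid_mul_self := h.right_mul_self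
  right_mul_self := h.left_mul_self
  mul_mul_eq_one := mul_eq_one_comm.mp ((mul_assoc x y z).symm.trans h.mul_mul_eq_one)

theorem swap (h : IsKleinTriple x y z) : IsKleinTriple y x z where
  left_mul_self := h.mid_mul_self
  mid_mul_self := h.left_mul_self
  right_mul_self := h.right_mul_self
  mul_mul_eq_one := by
    have hyz : y * z = x := h.rotate.mul_eq
    rw [← hyz, ← mul_assoc, h.mid_mul_self, one_mul, h.right_mul_self]

theorem commute (h : IsKleinTriple x y z) : Commute x y :=
  h.mul_eq.trans h.swap.mul_eq.symm

end IsKleinTriple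

section Gadgets

variable {G : Type*} [Group G]

theorem conj_eq_of_isKleinTriple {b c d f q₁ q₂ q₃ q₄ q₅ q₆ : G}
    (hdf : IsKleinTriple d q₁ f) (hbf : IsKleinTriple b f q₂) (hq : IsKleinTriple q₂ q₃ q₄)
    (hd : IsKleinTriple d q₄ q₅) (hc : IsKleinTriple c q₅ q₆) (hq' : IsKleinTriple q₁ q₃ q₆) :
    d * b * d = c :=
  calc d * b * d = d * b * (f * (q₃ * q₆)) := by
        rw [hq'.rotate.mul_eq, hdf.rotate.swap.mul_eq]
    _ = d * (b * f * q₃) * q₆ := by simp only [mul_assoc]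
    _ = c := by rw [hbf.mul_eq, hq.mul_eq, hd.mul_eq, hc.rotate.mul_eq]

theorem mul_mul_mul_eq_of_magicSquare {f₀ f₁ f₂ g₀ g₁ g₂ m₀ m₁ m₂ J : G}
    (hf : IsKleinTriple f₀ f₁ f₂) (hg : IsKleinTriple g₀ g₁ g₂) (hm : IsKleinTriple m₀ m₁ m₂)
    (h₀ : IsKleinTriple f₀ g₂ m₀) (h₁ : IsKleinTriple f₂ g₀ m₁) (h₂ : f₁ * g₁ * m₂ = J)
    (hJ : Commute J f₂) : f₀ * g₀ * f₀ * g₀ = J := by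
  have hJ_eq : J = f₂ * (f₀ * g₀ * f₀ * g₀) * f₂ :=
    calc J = f₁ * g₁ * (m₀ * m₁) := by rw [hm.mul_eq, h₂]
      _ = f₂ * f₀ * g₁ * (g₂ * f₀ * (g₀ * f₂)) := by
        rw [hf.rotate.rotate.mul_eq, h₀.swap.mul_eq, h₁.swap.mul_eq]
      _ = f₂ * (f₀ * (g₁ * g₂) * f₀ * g₀) * f₂ := by simp only [mul_assoc]
      _ = f₂ * (f₀ * g₀ * f₀ * g₀) * f₂ := by rw [hg.rotate.mul_eq]
  have hf₂ : f₂ * f₂ = 1 := hf.right_mul_self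
  have hconj : J * f₂ = f₂ * (f₀ * g₀ * f₀ * g₀) := by
    conv_lhs => rw [hJ_eq, mul_assoc, hf₂, mul_one]
  exact (mul_left_cancel (hJ.eq.symm.trans hconj)).symm

end Gadgets

namespace Ga

variable {r : ℕ}

local notation "π" => PresentedGroup.mk (GaRels r)

theorem mk_of_mul_self (s : GaGen r) : π (FreeGroup.of s) * π (FreeGroup.of s) = 1 :=
  PresentedGroup.one_of_mem (Or.inl (Or.inl ⟨s, rfl⟩))

theorem mk_dite_of_mul_self (p : Prop) [Decidable p] (s : p → GaGen r) :
    π (if h : p then FreeGroup.of (s h) else 1) *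
      π (if h : p then FreeGroup.of (s h) else 1) = 1 := by
  split
  · exact mk_of_mul_self _
  · rw [map_one, one_mul]

theorem mk_gb_mul_self {i : ℕ} : π (gb r i) * π (gb r i) = 1 := mk_dite_of_mul_self _ _

theorem mk_gc_mul_self {i : ℕ} : π (gc r i) * π (gc r i) = 1 := mk_dite_of_mul_self _ _

theorem mk_gd_mul_self {i : ℕ} : π (gd r i) * π (gd r i) = 1 := mk_dite_of_mul_self _ _

theorem mk_gp_mul_self {i l : ℕ} : π (gp r i l) * π (gp r i l) = 1 := mk_dite_of_mul_self _ _

theorem mk_gf_mul_self {l : ℕ} : π (gf r l) * π (gf r l) = 1 := mk_dite_of_mul_self _ _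

theorem mk_gg_mul_self {l : ℕ} : π (gg r l) * π (gg r l) = 1 := mk_dite_of_mul_self _ _

theorem mk_gm_mul_self {l : ℕ} : π (gm r l) * π (gm r l) = 1 := mk_dite_of_mul_self _ _

theorem mk_gq_mul_self {t : {t : ℕ × ℕ × ℕ // t ∈ Cset r}} {l : ℕ} :
    π (gq r t l) * π (gq r t l) = 1 := mk_dite_of_mul_self _ _

theorem commute_mk_gJ_mk_of (s : GaGen r) : Commute (π (gJ r)) (π (FreeGroup.of s)) := by
  obtain rfl | hs := eq_or_ne s GaGen.J
  · exact Commute.refl _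
  · have hJs : π (gJ r) * π (FreeGroup.of s) * (π (gJ r) * π (FreeGroup.of s)) = 1 :=
      (mul_assoc _ _ _).symm.trans (PresentedGroup.one_of_mem (Or.inl (Or.inr ⟨s, hs, rfl⟩)))
    exact IsKleinTriple.commute ⟨mk_of_mul_self _, mk_of_mul_self _, hJs, hJs⟩

theorem mk_gJ_mem_center : π (gJ r) ∈ Subgroup.center (Ga r) := by
  have hle : Subgroup.closure (Set.range PresentedGroup.of) ≤
      Subgroup.centralizer {π (gJ r)} := by
    rw [Subgroup.closure_le]
    rintro _ ⟨s, rfl⟩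
    exact Subgroup.mem_centralizer_singleton_iff.mpr (commute_mk_gJ_mk_of s).symm.eq
  rw [PresentedGroup.closure_range_of] at hle
  exact Subgroup.mem_center_iff.mpr fun w =>
    Subgroup.mem_centralizer_singleton_iff.mp (hle (Subgroup.mem_top w))

theorem commute_mk_gJ (w : Ga r) : Commute (π (gJ r)) w :=
  (Subgroup.mem_center_iff.mp mk_gJ_mem_center w).symm

theorem mk_eq_one_of_mem_gaRelsLin {w : FreeGroup (GaGen r)} (hw : w ∈ GaRelsLin r) : π w = 1 :=
  PresentedGroup.one_of_mem (Or.inr hw)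

theorem isKleinTriple_mk_gf : IsKleinTriple (π (gf r 0)) (π (gf r 1)) (π (gf r 2)) := by
  have one_mem : 1 ∈ Finset.Icc 1 (r + 5) := Finset.mem_Icc.mpr ⟨le_rfl, by omega⟩
  exact ⟨mk_gf_mul_self, mk_gf_mul_self, mk_gf_mul_self,
    mk_eq_one_of_mem_gaRelsLin (Or.inl (Or.inl (Set.mem_biUnion one_mem (by simp))))⟩

theorem mk_gd_mul_gb_mul_gd_eq_mk_gc {i j k : ℕ} (hc : (i, j, k) ∈ Cset r) :
    π (gd r i * gb r j * gd r i) = π (gc r k) := by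
  have rel w hw := mk_eq_one_of_mem_gaRelsLin (w := w)
    (Or.inl (Or.inr (Set.mem_iUnion_of_mem ⟨(i, j, k), hc⟩ hw)))
  simp only [Set.mem_insert_iff, Set.mem_singleton_iff, forall_eq_or_imp, forall_eq, map_mul]
    at rel
  obtain ⟨-, hdf, hbf, hq, hd, hck, hq'⟩ := rel
  simp only [map_mul]
  exact conj_eq_of_isKleinTriple
    ⟨mk_gd_mul_self, mk_gq_mul_self, mk_gf_mul_self, hdf⟩
    ⟨mk_gb_mul_self, mk_gf_mul_self, mk_gq_mul_self, hbf⟩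
    ⟨mk_gq_mul_self, mk_gq_mul_self, mk_gq_mul_self, hq⟩
    ⟨mk_gd_mul_self, mk_gq_mul_self, mk_gq_mul_self, hd⟩
    ⟨mk_gc_mul_self, mk_gq_mul_self, mk_gq_mul_self, hck⟩
    ⟨mk_gq_mul_self, mk_gq_mul_self, mk_gq_mul_self, hq'⟩

theorem mk_gf_zero_mul_gb_mul_gf_zero_eq_mk_gc {i : ℕ} (hi : i ∈ Finset.Icc 1 (r + 5)) :
    π (gf r 0 * gb r i * gf r 0) = π (gc r i) := by
  have rel w hw := mk_eq_one_of_mem_gaRelsLin (w := w)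
    (Or.inl (Or.inl (Set.mem_biUnion hi hw)))
  simp only [Set.mem_insert_iff, Set.mem_singleton_iff, forall_eq_or_imp, forall_eq, map_mul]
    at rel
  obtain ⟨-, -, -, hbf, hp, hf, hc, hp'⟩ := rel
  simp only [map_mul]
  exact conj_eq_of_isKleinTriple
    isKleinTriple_mk_gf
    ⟨mk_gb_mul_self, mk_gf_mul_self, mk_gp_mul_self, hbf⟩
    ⟨mk_gp_mul_self, mk_gp_mul_self, mk_gp_mul_self, hp⟩
    ⟨mk_gf_mul_self, mk_gp_mul_self, mk_gp_mul_self, hf⟩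
    ⟨mk_gc_mul_self, mk_gp_mul_self, mk_gp_mul_self, hc⟩
    ⟨mk_gf_mul_self, mk_gp_mul_self, mk_gp_mul_self, hp'⟩

theorem magicSquare_relations :
    IsKleinTriple (π (gg r 0)) (π (gg r 1)) (π (gg r 2)) ∧
    IsKleinTriple (π (gm r 0)) (π (gm r 1)) (π (gm r 2)) ∧
    IsKleinTriple (π (gf r 0)) (π (gg r 2)) (π (gm r 0)) ∧
    IsKleinTriple (π (gf r 2)) (π (gg r 0)) (π (gm r 1)) ∧
    π (gf r 1) * π (gg r 1) * π (gm r 2) = π (gJ r) := by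
  have rel w hw := mk_eq_one_of_mem_gaRelsLin (r := r) (w := w) (Or.inr hw)
  simp only [Set.mem_insert_iff, Set.mem_singleton_iff, forall_eq_or_imp, forall_eq, map_mul,
    map_inv] at rel
  obtain ⟨hg, hm, h₀, h₁, h₂⟩ := rel
  exact ⟨⟨mk_gg_mul_self, mk_gg_mul_self, mk_gg_mul_self, hg⟩,
    ⟨mk_gm_mul_self, mk_gm_mul_self, mk_gm_mul_self, hm⟩,
    ⟨mk_gf_mul_self, mk_gg_mul_self, mk_gm_mul_self, h₀⟩,
    ⟨mk_gf_mul_self, mk_gg_mul_self, mk_gm_mul_self, h₁⟩,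
    mul_inv_eq_one.mp h₂⟩

theorem mk_gf_zero_mul_gg_zero_mul_self_eq_mk_gJ :
    π (gf r 0 * gg r 0 * gf r 0 * gg r 0) = π (gJ r) := by
  obtain ⟨hg, hm, h₀, h₁, h₂⟩ := magicSquare_relations (r := r)
  simp only [map_mul]
  exact mul_mul_mul_eq_of_magicSquare isKleinTriple_mk_gf hg hm h₀ h₁ h₂ (commute_mk_gJ _)

theorem mk_gf_two_mul_gg_two_mul_self_eq_mk_gJ :
    π (gf r 2 * gg r 2 * gf r 2 * gg r 2) = π (gJ r) := by
  obtain ⟨hg, hm, h₀, h₁, h₂⟩ := magicSquare_relations (r := r)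
  simp only [map_mul]
  exact mul_mul_mul_eq_of_magicSquare isKleinTriple_mk_gf.rotate.swap hg.rotate.swap hm.swap
    h₁ h₀ h₂ (commute_mk_gJ _)

end Ga

/-- In the solution group `Γ`: `d_i b_j d_i = c_k` for every
`(i,j,k) ∈ C(r)`; `f₀ b_i f₀ = c_i` for every `1 ≤ i ≤ r+5`; `f₀g₀f₀g₀ = J`; and
`f₂g₂f₂g₂ = J`. -/
theorem stmt_6 (r : ℕ) (hr : 2 ≤ r) :
    (∀ i j k : ℕ, (i, j, k) ∈ Cset r →
      PresentedGroup.mk (GaRels r) (gd r i * gb r j * gd r i) =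
        PresentedGroup.mk (GaRels r) (gc r k)) ∧
    (∀ i ∈ Finset.Icc 1 (r + 5),
      PresentedGroup.mk (GaRels r) (gf r 0 * gb r i * gf r 0) =
        PresentedGroup.mk (GaRels r) (gc r i)) ∧
    PresentedGroup.mk (GaRels r) (gf r 0 * gg r 0 * gf r 0 * gg r 0) =
      PresentedGroup.mk (GaRels r) (gJ r) ∧
    PresentedGroup.mk (GaRels r) (gf r 2 * gg r 2 * gf r 2 * gg r 2) =
      PresentedGroup.mk (GaRels r) (gJ r) :=
  ⟨fun _ _ _ hc => Ga.mk_gd_mul_gb_mul_gd_eq_mk_gc hc,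
    fun _ hi => Ga.mk_gf_zero_mul_gb_mul_gf_zero_eq_mk_gc hi,
    Ga.mk_gf_zero_mul_gg_zero_mul_self_eq_mk_gJ,
    Ga.mk_gf_two_mul_gg_two_mul_self_eq_mk_gJ⟩
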